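/- Let S = {s_1,…,s_K} (K ≥ 3) be a protocol sequence set in which all sequences have the same duty factor f = n/d with n, d positive integers, gcd(n, d) = 1 and 0 < f < 1. Suppose S is TI with MPR capability γ = K−2 and R_i > 0 for every user i. If gcd(K−2, d) = 1, then S is SI. -/

import Mathlib

open Finset

/-- Generalized Hamming cross-correlation of the sequences indexed by `A`
(only the shifts `τ j` with `j ∈ A` matter). -/
def Hcorr {K L : ℕ} [NeZero L] (s : Fin K → ZMod L → ℕ)
    (A : Finset (Fin K)) (τ : Fin K → ZMod L) : ℕ :=
  ∑ t : ZMod L, ∏ j ∈ A, s j (t + τ j)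

/-- The family `s` is shift-invariant (SI): every generalized Hamming
cross-correlation is independent of the relative shifts. -/
def IsSI {K L : ℕ} [NeZero L] (s : Fin K → ZMod L → ℕ) : Prop :=
  ∀ A : Finset (Fin K), A.Nonempty →
    ∀ τ τ' : Fin K → ZMod L, Hcorr s A τ = Hcorr s A τ'

/-- Number of slots `t` in one period where user `i` transmits and at most
`γ - 1` other users transmit. -/
def Rcount {K L : ℕ} [NeZero L] (s : Fin K → ZMod L → ℕ) (γ : ℕ)
    (i : Fin K) (τ : Fin K → ZMod L) : ℕ :=
  (Finset.univ.filter (fun t : ZMod L =>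
    s i (t + τ i) = 1 ∧ ∑ j ∈ Finset.univ.erase i, s j (t + τ j) ≤ γ - 1)).card

/-- Throughput of user `i` under MPR capability `γ` at shifts `τ`. -/
def R {K L : ℕ} [NeZero L] (s : Fin K → ZMod L → ℕ) (γ : ℕ)
    (i : Fin K) (τ : Fin K → ZMod L) : ℚ :=
  (Rcount s γ i τ : ℚ) / L

/-- The family `s` is throughput-invariant (TI) with MPR capability `γ`. -/
def IsTI {K L : ℕ} [NeZero L] (s : Fin K → ZMod L → ℕ) (γ : ℕ) : Prop :=
  ∀ i : Fin K, ∀ τ τ' : Fin K → ZMod L, R s γ i τ = R s γ i τ'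

/-- Duty factor of a single sequence. -/
def duty {L : ℕ} [NeZero L] (s : ZMod L → ℕ) : ℚ :=
  (∑ t : ZMod L, (s t : ℚ)) / L

/-!
Let `γ = K - 2` and let the excess at shifts `τ` be the total over a period of the number of
transmissions in a slot beyond the `γ` that can be received. Inspecting one slot gives
`Rcount i τ + excess τ = weight i + H(τ; all users but i)`. The correlation on the right does not
involve `τ i`, and `Rcount i` is constant, so the excess does not involve `τ i` either. As this
holds for every `i`, the excess is constant, and then so is the correlation of any `K - 1` users.
A second slotwise identity, `excess τ + (K - 2) * H(τ; all) = ∑ i, H(τ; all but i)`, makes the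
correlation of all `K` users constant. Averaging over the shift of a user removes that user from a
correlation, which settles the remaining sets of users.
-/

section DependsOn

variable {ι β : Type*} {α : ι → Type*} {f : (∀ i, α i) → β}

lemma dependsOn_inter {s t : Set ι} (hs : DependsOn f s) (ht : DependsOn f t) :
    DependsOn f (s ∩ t) := by
  classical
  intro x y hxy
  calc f x = f (s.piecewise x y) := hs fun i hi => (s.piecewise_eq_of_mem x y hi).symm
    _ = f y := ht fun i hi => by
      by_cases his : i ∈ s
      · rw [s.piecewise_eq_of_mem x y his, hxy i ⟨his, hi⟩]
      · exact s.piecewise_eq_of_notMem x y his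

lemma dependsOn_compl_coe_of_forall_mem (T : Finset ι) (h : ∀ i ∈ T, DependsOn f {i}ᶜ) :
    DependsOn f (T : Set ι)ᶜ := by
  classical
  induction T using Finset.induction_on with
  | empty => simpa using dependsOn_univ f
  | insert a T _ ih =>
    rw [coe_insert, Set.insert_eq, Set.compl_union]
    exact dependsOn_inter (h a (mem_insert_self a T))
      (ih fun i hi => h i (mem_insert_of_mem hi))

lemma dependsOn_empty_of_forall_compl_singleton [Finite ι] (h : ∀ i, DependsOn f {i}ᶜ) :
    DependsOn f ∅ := by
  have := Fintype.ofFinite ι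
  simpa using dependsOn_compl_coe_of_forall_mem univ fun i _ => h i

end DependsOn

section ZeroOne

variable {ι : Type*} {A : Finset ι} {x : ι → ℕ}

lemma sum_le_card_of_le_one (hx : ∀ i ∈ A, x i ≤ 1) : ∑ i ∈ A, x i ≤ #A := by
  simpa using sum_le_card_nsmul A x 1 hx

lemma sum_eq_card_iff_of_le_one (hx : ∀ i ∈ A, x i ≤ 1) :
    ∑ i ∈ A, x i = #A ↔ ∀ i ∈ A, x i = 1 := by
  rw [card_eq_sum_ones, sum_eq_sum_iff_of_le hx]

lemma prod_eq_ite_sum_eq_card (hx : ∀ i ∈ A, x i ≤ 1) :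
    ∏ i ∈ A, x i = if ∑ i ∈ A, x i = #A then 1 else 0 := by
  simp only [sum_eq_card_iff_of_le_one hx]
  split_ifs with h
  · exact prod_eq_one h
  · push Not at h
    obtain ⟨i, hi, hxi⟩ := h
    exact prod_eq_zero hi (Nat.lt_one_iff.mp ((hx i hi).lt_of_ne hxi))

variable [DecidableEq ι]

lemma ite_add_sum_tsub_eq_add_prod_erase {i : ι} (hA : 3 ≤ #A) (hi : i ∈ A)
    (hx : ∀ j ∈ A, x j ≤ 1) :
    (if x i = 1 ∧ ∑ j ∈ A.erase i, x j ≤ #A - 3 then 1 else 0) + (∑ j ∈ A, x j - (#A - 2)) =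
      x i + ∏ j ∈ A.erase i, x j := by
  have hx' : ∀ j ∈ A.erase i, x j ≤ 1 := fun j hj => hx j (mem_of_mem_erase hj)
  have hle := sum_le_card_of_le_one hx'
  have hxi := hx i hi
  rw [prod_eq_ite_sum_eq_card hx', ← add_sum_erase A x hi]
  rw [card_erase_of_mem hi] at hle ⊢
  split_ifs <;> omega

lemma sum_tsub_add_mul_prod_eq_sum_prod_erase (hA : 2 ≤ #A) (hx : ∀ i ∈ A, x i ≤ 1) :
    (∑ i ∈ A, x i - (#A - 2)) + (#A - 2) * ∏ i ∈ A, x i = ∑ i ∈ A, ∏ j ∈ A.erase i, x j := by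
  by_cases hone : ∀ i ∈ A, x i = 1
  · have hprod : ∀ i ∈ A, ∏ j ∈ A.erase i, x j = 1 := fun i _ =>
      prod_eq_one fun j hj => hone j (mem_of_mem_erase hj)
    rw [(sum_eq_card_iff_of_le_one hx).mpr hone, prod_eq_one hone, sum_congr rfl hprod,
      ← card_eq_sum_ones]
    omega
  · push Not at hone
    obtain ⟨a, ha, hxa⟩ := hone
    have hxa : x a = 0 := Nat.lt_one_iff.mp ((hx a ha).lt_of_ne hxa)
    have hx' : ∀ j ∈ A.erase a, x j ≤ 1 := fun j hj => hx j (mem_of_mem_erase hj)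
    have hsum : ∑ i ∈ A, ∏ j ∈ A.erase i, x j = ∏ j ∈ A.erase a, x j :=
      sum_eq_single_of_mem a ha fun b _ hba =>
        prod_eq_zero (mem_erase.mpr ⟨hba.symm, ha⟩) hxa
    have hle := sum_le_card_of_le_one hx'
    rw [hsum, prod_eq_zero ha hxa, prod_eq_ite_sum_eq_card hx', ← add_sum_erase A x ha, hxa]
    rw [card_erase_of_mem ha] at hle ⊢
    split_ifs <;> omega

end ZeroOne

section ProtocolSequence

variable {K L : ℕ} [NeZero L] {s : Fin K → ZMod L → ℕ}

/-- The total excess over the MPR capability `γ`: the number of transmissions beyond `γ` in a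
slot, summed over one period. The subtraction is truncated, so slots with at most `γ`
transmissions contribute `0`. -/
def excess (s : Fin K → ZMod L → ℕ) (γ : ℕ) (τ : Fin K → ZMod L) : ℕ :=
  ∑ t, (∑ j, s j (t + τ j) - γ)

lemma rcount_add_excess (hK : 3 ≤ K) (hs : ∀ i t, s i t ≤ 1) (i : Fin K) (τ : Fin K → ZMod L) :
    Rcount s (K - 2) i τ + excess s (K - 2) τ = ∑ t, s i t + Hcorr s (univ.erase i) τ := by
  have hweight : ∑ t, s i t = ∑ t, s i (t + τ i) :=
    (Equiv.sum_comp (Equiv.addRight (τ i)) (s i)).symm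
  rw [hweight, Rcount, excess, Hcorr, card_filter, ← sum_add_distrib, ← sum_add_distrib]
  refine sum_congr rfl fun t _ => ?_
  simpa [Nat.sub_sub] using ite_add_sum_tsub_eq_add_prod_erase (A := univ)
    (by simpa using hK) (mem_univ i) fun j _ => hs j (t + τ j)

lemma excess_add_mul_hcorr_univ (hK : 2 ≤ K) (hs : ∀ i t, s i t ≤ 1) (τ : Fin K → ZMod L) :
    excess s (K - 2) τ + (K - 2) * Hcorr s univ τ = ∑ i, Hcorr s (univ.erase i) τ := by
  simp only [excess, Hcorr]
  rw [sum_comm, mul_sum, ← sum_add_distrib]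
  refine sum_congr rfl fun t _ => ?_
  simpa using sum_tsub_add_mul_prod_eq_sum_prod_erase (A := univ)
    (by simpa using hK) fun j _ => hs j (t + τ j)

lemma dependsOn_hcorr (s : Fin K → ZMod L → ℕ) (A : Finset (Fin K)) :
    DependsOn (Hcorr s A) A := fun τ τ' h =>
  sum_congr rfl fun t _ => prod_congr rfl fun j hj => by rw [h j hj]

lemma sum_hcorr_update (s : Fin K → ZMod L → ℕ) {A : Finset (Fin K)} {j : Fin K} (hj : j ∈ A)
    (τ : Fin K → ZMod L) :
    ∑ v, Hcorr s A (Function.update τ j v) = (∑ t, s j t) * Hcorr s (A.erase j) τ := by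
  simp only [Hcorr]
  rw [sum_comm, mul_sum]
  refine sum_congr rfl fun t _ => ?_
  have hprod (v : ZMod L) : ∏ k ∈ A, s k (t + Function.update τ j v k) =
      s j (t + v) * ∏ k ∈ A.erase j, s k (t + τ k) := by
    rw [← mul_prod_erase A _ hj, Function.update_self]
    congr 1
    exact prod_congr rfl fun k hk => by rw [Function.update_of_ne (ne_of_mem_erase hk)]
  rw [sum_congr rfl fun v _ => hprod v, ← sum_mul, ← Equiv.sum_comp (Equiv.addLeft t) (s j)]
  rfl

lemma dependsOn_empty_hcorr_erase {A : Finset (Fin K)} {j : Fin K} (hj : s j ≠ 0)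
    (hA : DependsOn (Hcorr s A) ∅) : DependsOn (Hcorr s (A.erase j)) ∅ := by
  by_cases hjA : j ∈ A
  · have hweight : ∑ t, s j t ≠ 0 := fun h =>
      hj (funext fun t => sum_eq_zero_iff.mp h t (mem_univ t))
    intro τ τ' _
    refine mul_left_cancel₀ hweight ?_
    rw [← sum_hcorr_update s hjA, ← sum_hcorr_update s hjA]
    exact sum_congr rfl fun v _ => hA.empty _ _
  · rwa [erase_eq_of_notMem hjA]

lemma dependsOn_empty_hcorr_sdiff {A B : Finset (Fin K)} (hB : ∀ j ∈ B, s j ≠ 0)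
    (hA : DependsOn (Hcorr s A) ∅) : DependsOn (Hcorr s (A \ B)) ∅ := by
  induction B using Finset.induction_on with
  | empty => rwa [sdiff_empty]
  | insert b B _ ih =>
    rw [sdiff_insert]
    exact dependsOn_empty_hcorr_erase (hB b (mem_insert_self b B))
      (ih fun j hj => hB j (mem_insert_of_mem hj))

lemma isSI_of_dependsOn_empty_hcorr_univ (hs : ∀ i, s i ≠ 0) (h : DependsOn (Hcorr s univ) ∅) :
    IsSI s := by
  intro A _ τ τ'
  have hA := dependsOn_empty_hcorr_sdiff (B := Aᶜ) (fun j _ => hs j) h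
  rw [← compl_eq_univ_sdiff, compl_compl] at hA
  exact hA.empty τ τ'

lemma dependsOn_empty_rcount {γ : ℕ} (hTI : IsTI s γ) (i : Fin K) : DependsOn (Rcount s γ i) ∅ := by
  intro τ τ' _
  have hR : (Rcount s γ i τ : ℚ) / L = Rcount s γ i τ' / L := hTI i τ τ'
  exact_mod_cast (div_left_inj' (NeZero.ne (L : ℚ))).mp hR

lemma dependsOn_empty_excess (hK : 3 ≤ K) (hs : ∀ i t, s i t ≤ 1) (hTI : IsTI s (K - 2)) :
    DependsOn (excess s (K - 2)) ∅ := by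
  refine dependsOn_empty_of_forall_compl_singleton fun i τ τ' hττ' => ?_
  have hR := (dependsOn_empty_rcount hTI i).empty τ τ'
  have hH : Hcorr s (univ.erase i) τ = Hcorr s (univ.erase i) τ' :=
    dependsOn_hcorr s (univ.erase i) (by simpa using hττ')
  have hτ := rcount_add_excess hK hs i τ
  have hτ' := rcount_add_excess hK hs i τ'
  omega

lemma dependsOn_empty_hcorr_univ_erase (hK : 3 ≤ K) (hs : ∀ i t, s i t ≤ 1) (hTI : IsTI s (K - 2))
    (i : Fin K) : DependsOn (Hcorr s (univ.erase i)) ∅ := by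
  intro τ τ' _
  have hR := (dependsOn_empty_rcount hTI i).empty τ τ'
  have hE := (dependsOn_empty_excess hK hs hTI).empty τ τ'
  have hτ := rcount_add_excess hK hs i τ
  have hτ' := rcount_add_excess hK hs i τ'
  omega

lemma dependsOn_empty_hcorr_univ (hK : 3 ≤ K) (hs : ∀ i t, s i t ≤ 1) (hTI : IsTI s (K - 2)) :
    DependsOn (Hcorr s univ) ∅ := by
  intro τ τ' _
  have hsum : ∑ i, Hcorr s (univ.erase i) τ = ∑ i, Hcorr s (univ.erase i) τ' :=
    sum_congr rfl fun i _ => (dependsOn_empty_hcorr_univ_erase hK hs hTI i).empty τ τ'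
  rw [← excess_add_mul_hcorr_univ (by omega) hs, ← excess_add_mul_hcorr_univ (by omega) hs,
    (dependsOn_empty_excess hK hs hTI).empty τ τ'] at hsum
  exact mul_left_cancel₀ (by omega) (add_left_cancel hsum)

end ProtocolSequence

theorem stmt18_general (K L : ℕ) (hK : 3 ≤ K) [NeZero L]
    (s : Fin K → ZMod L → ℕ) (hbin : ∀ i t, s i t = 0 ∨ s i t = 1)
    (hs : ∀ i, s i ≠ 0) (hTI : IsTI s (K - 2)) :
    IsSI s := by
  have hle (i : Fin K) (t : ZMod L) : s i t ≤ 1 := Nat.le_one_iff_eq_zero_or_eq_one.mpr (hbin i t)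
  exact isSI_of_dependsOn_empty_hcorr_univ hs (dependsOn_empty_hcorr_univ hK hle hTI)

theorem stmt18 (K L : ℕ) (hK : 3 ≤ K) (hL : 1 ≤ L) [NeZero L]
    (s : Fin K → ZMod L → ℕ) (hbin : ∀ i t, s i t = 0 ∨ s i t = 1)
    (n d : ℕ) (hn : 0 < n) (hd : 0 < d) (hcop : Nat.Coprime n d)
    (hf0 : 0 < (n : ℚ) / (d : ℚ)) (hf1 : (n : ℚ) / (d : ℚ) < 1)
    (hduty : ∀ i, duty (s i) = (n : ℚ) / (d : ℚ))
    (hTI : IsTI s (K - 2))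
    (hR : ∀ (i : Fin K) (τ : Fin K → ZMod L), 0 < R s (K - 2) i τ)
    (hgcd : Nat.gcd (K - 2) d = 1) :
    IsSI s := by
  refine stmt18_general K L hK s hbin (fun i hi => (hR i 0).ne' ?_) hTI
  simp [R, Rcount, hi]
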